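/- Let A ⊆ ℤ^m with a fixed partition of {1,…,m} into p blocks, and define ρ : ℤ^m → ℕ^{2m} by ρ(e₁,…,e_m) = (max{e₁,0},…,max{e_m,0}, max{−e₁,0},…,max{−e_m,0}). Let B = ρ(A) ∪ {ē₁,…,ē_m} ⊆ ℕ^{2m}, where ē_i is the 2m-tuple with 1 in coordinates i and m+i and 0 elsewhere. Then φ_A(t₁,…,t_p) = ω_B(t₁,…,t_p), where ω_B is the dimension polynomial of B associated with the partition {1,…,2m} = Δ′₁ ∪ … ∪ Δ′_p, Δ′_i = Δ_i ∪ {m+k : k ∈ Δ_i}. -/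

import Mathlib

/-- The order of `a` with respect to the `k`-th block of the partition `π` (ℕ-valued tuples). -/
def ordBlockN {ι : Type*} [Fintype ι] {p : ℕ} (π : ι → Fin p) (k : Fin p) (a : ι → ℕ) : ℕ :=
  ∑ i ∈ Finset.univ.filter (fun i => π i = k), a i

/-- `V_E = {v : no e ∈ E satisfies e ≤ v componentwise}`. -/
def VSet {ι : Type*} (E : Set (ι → ℕ)) : Set (ι → ℕ) :=
  {v | ∀ e ∈ E, ¬ e ≤ v}

/-- `V_E(r₁,…,r_p)`. -/
def VSetBd {ι : Type*} [Fintype ι] {p : ℕ} (π : ι → Fin p) (E : Set (ι → ℕ))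
    (r : Fin p → ℕ) : Set (ι → ℕ) :=
  {v ∈ VSet E | ∀ k, ordBlockN π k v ≤ r k}

/-- The order of `a ∈ ℤ^m` with respect to the `k`-th block of the partition `π`. -/
def ordBlockZ {m p : ℕ} (π : Fin m → Fin p) (k : Fin p) (a : Fin m → ℤ) : ℕ :=
  ∑ i ∈ Finset.univ.filter (fun i => π i = k), (a i).natAbs

/-- `e ⊴ e'` iff `e` and `e'` lie in a common orthant of `ℤ^m` and `|e_i| ≤ |e'_i|` for all `i`. -/
def orthLE {m : ℕ} (e e' : Fin m → ℤ) : Prop :=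
  ∀ i, 0 ≤ e i * e' i ∧ |e i| ≤ |e' i|

/-- `W_A = {w ∈ ℤ^m : no a ∈ A satisfies a ⊴ w}`. -/
def WSet {m : ℕ} (A : Set (Fin m → ℤ)) : Set (Fin m → ℤ) :=
  {w | ∀ a ∈ A, ¬ orthLE a w}

/-- `W_A(r₁,…,r_p)`. -/
def WSetBd {m p : ℕ} (π : Fin m → Fin p) (A : Set (Fin m → ℤ)) (r : Fin p → ℕ) :
    Set (Fin m → ℤ) :=
  {w ∈ WSet A | ∀ k, ordBlockZ π k w ≤ r k}

/-- The map `ρ : ℤ^m → ℕ^{2m}`,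
`ρ(e₁,…,e_m) = (max{e₁,0},…,max{e_m,0}, max{−e₁,0},…,max{−e_m,0})`
(here `ℕ^{2m}` is modelled as `Fin m ⊕ Fin m → ℕ`). -/
def rhoMap {m : ℕ} (e : Fin m → ℤ) : (Fin m ⊕ Fin m) → ℕ :=
  Sum.elim (fun i => (e i).toNat) (fun i => (-(e i)).toNat)

/-- The `2m`-tuple `ē_i` with `1` in coordinates `i` and `m+i` and `0` elsewhere. -/
def eBar {m : ℕ} (i : Fin m) : (Fin m ⊕ Fin m) → ℕ :=
  fun j => if j = Sum.inl i ∨ j = Sum.inr i then 1 else 0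

/-!
Writing `w ∈ ℤ^m` as `w⁺ - w⁻` gives `ρ(w) = (w⁺, w⁻)`. The relation `a ⊴ w` says that `a⁺ ≤ w⁺`
and `a⁻ ≤ w⁻`, so `ρ` is an order embedding of `(ℤ^m, ⊴)` into `ℕ^{2m}`; it preserves block orders
because `|w| = w⁺ + w⁻`. Its image consists of the tuples in which, for each `i`, one of the
coordinates `i`, `m + i` vanishes, that is, of the tuples lying above no `ē_i`. Hence `ρ` maps
`W_A(r)` bijectively onto `V_B(r)` for every `r`, and two polynomials that agree at all sufficiently
large natural points coincide.
-/

theorem mvPolynomial_eq_of_eventually_eval_natCast_eq {σ R : Type*} [CommRing R] [IsDomain R]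
    [CharZero R] {P Q : MvPolynomial σ R}
    (h : ∀ᶠ r : σ → ℕ in Filter.atTop,
      MvPolynomial.eval (fun i => (r i : R)) P = MvPolynomial.eval (fun i => (r i : R)) Q) :
    P = Q := by
  obtain ⟨s, hs⟩ := Filter.eventually_atTop.1 h
  refine MvPolynomial.funext_set (fun i => Nat.cast '' Set.Ici (s i))
    (fun i => (Set.Ici_infinite _).image Nat.cast_injective.injOn) fun x hx => ?_
  choose r hr hrx using fun i => hx i (Set.mem_univ i)
  obtain rfl : (fun i => (r i : R)) = x := funext hrx
  exact hs r hr

theorem mul_nonneg_and_abs_le_abs_iff_posPart_le_and_negPart_le {R : Type*} [Ring R]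
    [LinearOrder R] [IsStrictOrderedRing R] {x y : R} :
    0 ≤ x * y ∧ |x| ≤ |y| ↔ x⁺ ≤ y⁺ ∧ x⁻ ≤ y⁻ := by
  constructor
  · rintro ⟨hxy, habs⟩
    rcases mul_nonneg_iff.1 hxy with ⟨hx, hy⟩ | ⟨hx, hy⟩
    · rw [abs_of_nonneg hx, abs_of_nonneg hy] at habs
      exact ⟨posPart_mono habs, by simp [negPart_eq_zero.2 hx]⟩
    · rw [abs_of_nonpos hx, abs_of_nonpos hy] at habs
      exact ⟨by simp [posPart_eq_zero.2 hx], negPart_anti (neg_le_neg_iff.1 habs)⟩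
  · rintro ⟨hpos, hneg⟩
    refine ⟨not_lt.1 fun hxy => ?_, ?_⟩
    · rcases mul_neg_iff.1 hxy with ⟨hx, hy⟩ | ⟨hx, hy⟩
      · rw [posPart_eq_zero.2 hy.le] at hpos
        exact hpos.not_gt (posPart_pos hx)
      · rw [negPart_eq_zero.2 hy.le] at hneg
        exact hneg.not_gt (negPart_pos hx)
    · rw [← posPart_add_negPart x, ← posPart_add_negPart y]
      exact add_le_add hpos hneg

theorem natCast_toNat_eq_posPart (x : ℤ) : (x.toNat : ℤ) = x⁺ :=
  Int.toNat_eq_max x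

theorem natCast_toNat_neg_eq_negPart (x : ℤ) : ((-x).toNat : ℤ) = x⁻ :=
  Int.toNat_eq_max (-x)

section Rho

variable {m p : ℕ}

theorem rhoMap_le_rhoMap_iff {a w : Fin m → ℤ} : rhoMap a ≤ rhoMap w ↔ orthLE a w := by
  simp only [orthLE, mul_nonneg_and_abs_le_abs_iff_posPart_le_and_negPart_le,
    ← natCast_toNat_eq_posPart, ← natCast_toNat_neg_eq_negPart, Nat.cast_le, Pi.le_def, Sum.forall,
    rhoMap, Sum.elim_inl, Sum.elim_inr, forall_and]

theorem rhoMap_inl_sub_rhoMap_inr (w : Fin m → ℤ) (i : Fin m) :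
    (rhoMap w (Sum.inl i) : ℤ) - rhoMap w (Sum.inr i) = w i :=
  Int.toNat_sub_toNat_neg (w i)

theorem rhoMap_injective : Function.Injective (rhoMap (m := m)) := fun a b hab => by
  ext i
  rw [← rhoMap_inl_sub_rhoMap_inr a, hab, rhoMap_inl_sub_rhoMap_inr]

theorem mem_range_rhoMap_iff {v : Fin m ⊕ Fin m → ℕ} :
    v ∈ Set.range rhoMap ↔ ∀ i, v (Sum.inl i) = 0 ∨ v (Sum.inr i) = 0 := by
  constructor
  · rintro ⟨w, rfl⟩ i
    simp only [rhoMap, Sum.elim_inl, Sum.elim_inr]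
    omega
  · intro hv
    refine ⟨fun i => (v (Sum.inl i) : ℤ) - v (Sum.inr i), ?_⟩
    ext (i | i) <;> have := hv i <;> simp only [rhoMap, Sum.elim_inl, Sum.elim_inr] <;> omega

theorem eBar_le_iff {i : Fin m} {v : Fin m ⊕ Fin m → ℕ} :
    eBar i ≤ v ↔ v (Sum.inl i) ≠ 0 ∧ v (Sum.inr i) ≠ 0 := by
  simp only [← Nat.one_le_iff_ne_zero]
  constructor
  · intro h
    exact ⟨by simpa [eBar] using h (Sum.inl i), by simpa [eBar] using h (Sum.inr i)⟩
  · rintro ⟨hl, hr⟩ j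
    unfold eBar
    split_ifs with hj
    · rcases hj with rfl | rfl <;> assumption
    · exact Nat.zero_le _

theorem VSet_range_eBar : VSet (Set.range (eBar (m := m))) = Set.range rhoMap := by
  ext v
  simp only [VSet, Set.mem_ofPred_eq, Set.forall_mem_range, eBar_le_iff, mem_range_rhoMap_iff,
    not_and_or, not_not]

theorem VSet_union {ι : Type*} (E F : Set (ι → ℕ)) : VSet (E ∪ F) = VSet E ∩ VSet F := by
  ext v
  simp only [VSet, Set.mem_ofPred_eq, Set.mem_inter_iff, Set.mem_union, or_imp, forall_and]

theorem rhoMap_preimage_VSet_image (A : Set (Fin m → ℤ)) :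
    rhoMap ⁻¹' VSet (rhoMap '' A) = WSet A := by
  ext w
  simp only [VSet, WSet, Set.mem_preimage, Set.mem_ofPred_eq, Set.forall_mem_image,
    rhoMap_le_rhoMap_iff]

theorem ordBlockN_sumElim {ι κ : Type*} [Fintype ι] [Fintype κ] (π : ι → Fin p) (τ : κ → Fin p)
    (k : Fin p) (v : ι ⊕ κ → ℕ) :
    ordBlockN (Sum.elim π τ) k v =
      ordBlockN π k (v ∘ Sum.inl) + ordBlockN τ k (v ∘ Sum.inr) := by
  simp only [ordBlockN, Finset.sum_filter, Fintype.sum_sum_type]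
  rfl

theorem ordBlockN_rhoMap (π : Fin m → Fin p) (k : Fin p) (w : Fin m → ℤ) :
    ordBlockN (Sum.elim π π) k (rhoMap w) = ordBlockZ π k w := by
  rw [ordBlockN_sumElim, ordBlockN, ordBlockN, ordBlockZ, ← Finset.sum_add_distrib]
  exact Finset.sum_congr rfl fun i _ => Int.toNat_add_toNat_neg_eq_natAbs (w i)

end Rho

section Counting

variable {m p : ℕ} (π : Fin m → Fin p) (A : Set (Fin m → ℤ)) (r : Fin p → ℕ)

theorem VSetBd_union_range_eBar_subset_range_rhoMap (τ : Fin m ⊕ Fin m → Fin p)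
    (E : Set (Fin m ⊕ Fin m → ℕ)) :
    VSetBd τ (E ∪ Set.range eBar) r ⊆ Set.range rhoMap := by
  rintro v ⟨hv, -⟩
  rw [VSet_union, VSet_range_eBar] at hv
  exact hv.2

theorem rhoMap_preimage_VSetBd :
    rhoMap ⁻¹' VSetBd (Sum.elim π π) (rhoMap '' A ∪ Set.range eBar) r = WSetBd π A r := by
  ext w
  simp only [VSetBd, WSetBd, VSet_union, VSet_range_eBar, ← rhoMap_preimage_VSet_image,
    Set.mem_preimage, Set.mem_ofPred_eq, Set.mem_inter_iff, Set.mem_range_self, and_true,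
    ordBlockN_rhoMap]

theorem ncard_WSetBd_eq_ncard_VSetBd :
    (WSetBd π A r).ncard =
      (VSetBd (Sum.elim π π) (rhoMap '' A ∪ Set.range eBar) r).ncard := by
  rw [← rhoMap_preimage_VSetBd]
  exact Set.ncard_preimage_of_injective_subset_range rhoMap_injective
    (VSetBd_union_range_eBar_subset_range_rhoMap r _ _)

end Counting

/-- **Reduction of `ℤ^m`-dimension polynomials to `ℕ^{2m}`-dimension polynomials.**
Let `A ⊆ ℤ^m` with a partition of `{1,…,m}` into `p` blocks, and let
`B = ρ(A) ∪ {ē₁,…,ē_m} ⊆ ℕ^{2m}`.  Then `φ_A = ω_B`, where `ω_B` is computed with respect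
to the doubled partition `Δ′_i = Δ_i ∪ {m+k : k ∈ Δ_i}` (encoded by `Sum.elim π π`):
any polynomial eventually counting `W_A(r̄)` equals any polynomial eventually counting
`V_B(r̄)`. -/
theorem dimension_polynomial_int_eq_dimension_polynomial_nat {m p : ℕ} (hm : 0 < m)
    (hp : 0 < p) (π : Fin m → Fin p) (hπ : Function.Surjective π) (A : Set (Fin m → ℤ))
    (φ ω : MvPolynomial (Fin p) ℚ)
    (hφ : ∃ s : Fin p → ℕ, ∀ r : Fin p → ℕ, (∀ i, s i ≤ r i) →
      MvPolynomial.eval (fun i => (r i : ℚ)) φ = ((WSetBd π A r).ncard : ℚ))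
    (hω : ∃ s : Fin p → ℕ, ∀ r : Fin p → ℕ, (∀ i, s i ≤ r i) →
      MvPolynomial.eval (fun i => (r i : ℚ)) ω =
        ((VSetBd (Sum.elim π π) ((rhoMap '' A) ∪ Set.range eBar) r).ncard : ℚ)) :
    φ = ω := by
  refine mvPolynomial_eq_of_eventually_eval_natCast_eq ?_
  filter_upwards [Filter.eventually_atTop.2 hφ, Filter.eventually_atTop.2 hω] with r hφr hωr
  rw [hφr, hωr, ncard_WSetBd_eq_ncard_VSetBd]
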